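/- For all ξ₁, ξ₂, η₁, η₂ > 0 with T₁(η₁) > 0, T₂(η₂) > 0 and S(η₁,η₂) > 0, writing T₁ = T₁(η₁), T₂ = T₂(η₂), S = S(η₁,η₂): ∫₀^∞ ∫₀^∞ e^{−η₁t₁−η₂t₂} E[exp(−ξ₁ L₁(t₁) − ξ₂ L₂(t₂))] dt₁ dt₂ = T₁T₂ / (η₁η₂(ξ₁+T₁)(ξ₂+T₂)) + ξ₁ξ₂(T₁+T₂−S) / (η₁η₂(ξ₁+T₁)(ξ₂+T₂)(ξ₁+ξ₂+S)). -/

import Mathlib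

open MeasureTheory ProbabilityTheory

/-!
For `X` exponential of rate `ξ`, independent of the process, `exp (-ξ L(t)) = ℙ(L(t) < X)`, and up
to a null set `L(t) < X` means `t < H(X)`. The weight `η exp (-η t)` makes `t` exponential as well,
so `η₁ η₂` times the double Laplace transform is the probability that `τ₁ < H₁(X₁)` and
`τ₂ < H₂(X₂)` for independent exponential times `τᵢ`, `Xᵢ` of rates `ηᵢ`, `ξᵢ`. Integrating out the
`τᵢ` first leaves `E[(1 - exp (-η₁ H₁(X₁))) (1 - exp (-η₂ H₂(X₂)))]`. Given `Xᵢ`, independence of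
increments is applied at the time `min X₁ X₂`, and memorylessness of the exponential law, on
`X₁ < X₂` and on `X₂ < X₁` separately, evaluates the remaining integral.
-/

open Set Real

section ExponentialMeasure

variable {r : ℝ}

lemma expMeasure_absolutelyContinuous (r : ℝ) : expMeasure r ≪ volume :=
  withDensity_absolutelyContinuous _ _

instance nullSingletonClass_expMeasure (r : ℝ) : NullSingletonClass (expMeasure r) :=
  ⟨fun x ↦ expMeasure_absolutelyContinuous r (measure_singleton x)⟩

lemma setIntegral_expMeasure {E : Type*} [NormedAddCommGroup E] [NormedSpace ℝ E]
    (hr : 0 ≤ r) {s : Set ℝ} (hs : MeasurableSet s) (hs0 : s ⊆ Ici 0) (f : ℝ → E) :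
    ∫ x in s, f x ∂expMeasure r = ∫ x in s, (r * exp (-(r * x))) • f x := by
  have density_meas : Measurable (gammaPDF 1 r) := (measurable_gammaPDFReal 1 r).ennreal_ofReal
  rw [expMeasure, gammaMeasure, setIntegral_withDensity_eq_setIntegral_toReal_smul density_meas
    (.of_forall fun _ ↦ ENNReal.ofReal_lt_top) f hs]
  refine setIntegral_congr_fun hs fun x hx ↦ ?_
  change (exponentialPDF r x).toReal • f x = _
  rw [exponentialPDF_of_nonneg (hs0 hx), ENNReal.toReal_ofReal (by positivity)]

lemma ae_pos_expMeasure (hr : 0 < r) : ∀ᵐ x ∂expMeasure r, 0 < x := by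
  have := isProbabilityMeasure_expMeasure hr
  have cdf_zero : (expMeasure r).real (Iic 0) = 0 := by
    rw [← cdf_eq_real, cdf_expMeasure_eq hr]
    simp
  rw [measureReal_eq_zero_iff] at cdf_zero
  simpa [ae_iff, Iic_def] using cdf_zero

lemma restrict_Ioi_expMeasure (hr : 0 < r) :
    (expMeasure r).restrict (Ioi 0) = expMeasure r :=
  Measure.restrict_eq_self_of_ae_mem (ae_pos_expMeasure hr)

lemma setIntegral_Ioi_exp_neg_mul (hr : 0 < r) (f : ℝ → ℝ) :
    ∫ x in Ioi 0, exp (-(r * x)) * f x = r⁻¹ * ∫ x, f x ∂expMeasure r := by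
  rw [← restrict_Ioi_expMeasure hr,
    setIntegral_expMeasure hr.le measurableSet_Ioi Ioi_subset_Ici_self]
  simp only [smul_eq_mul, mul_assoc, integral_const_mul]
  rw [inv_mul_cancel_left₀ hr.ne']

/-- Memorylessness: beyond `c`, the overshoot `x - c` is again exponential of rate `r`. -/
lemma setIntegral_Ioi_exp_overshoot (hr : 0 < r) {a c : ℝ} (ha : 0 ≤ a) (hc : 0 ≤ c) :
    ∫ x in Ioi c, exp (-((x - c) * a)) ∂expMeasure r = r / (r + a) * exp (-(r * c)) := by
  calc ∫ x in Ioi c, exp (-((x - c) * a)) ∂expMeasure r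
      = ∫ x in Ioi c, r * exp (a * c) * exp (-(r + a) * x) := by
        rw [setIntegral_expMeasure hr.le measurableSet_Ioi (Ioi_subset_Ici hc)]
        congr! 2 with x
        rw [smul_eq_mul, mul_assoc, mul_assoc, ← exp_add, ← exp_add]
        ring_nf
    _ = r / (r + a) * (exp (a * c) * exp (-(r + a) * c)) := by
        rw [integral_const_mul, integral_exp_mul_Ioi (by linarith)]
        field_simp
    _ = r / (r + a) * exp (-(r * c)) := by
        rw [← exp_add]
        ring_nf

lemma integral_exp_neg_mul_expMeasure (hr : 0 < r) {a : ℝ} (ha : 0 ≤ a) :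
    ∫ x, exp (-(x * a)) ∂expMeasure r = r / (r + a) := by
  simpa [restrict_Ioi_expMeasure hr] using setIntegral_Ioi_exp_overshoot hr ha le_rfl

lemma measureReal_Ioi_expMeasure (hr : 0 < r) {c : ℝ} (hc : 0 ≤ c) :
    (expMeasure r).real (Ioi c) = exp (-(r * c)) := by
  simpa [hr.ne'] using setIntegral_Ioi_exp_overshoot hr le_rfl hc

lemma measureReal_Iio_expMeasure (hr : 0 < r) {c : ℝ} (hc : 0 ≤ c) :
    (expMeasure r).real (Iio c) = 1 - exp (-(r * c)) := by
  have := isProbabilityMeasure_expMeasure hr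
  rw [measureReal_congr Iio_ae_eq_Iic, ← compl_Ioi, probReal_compl_eq_one_sub measurableSet_Ioi,
    measureReal_Ioi_expMeasure hr hc]

end ExponentialMeasure

section Prod

variable {α β Ω : Type*} [MeasurableSpace α] [MeasurableSpace β] [MeasurableSpace Ω]

lemma integral_integral_integral_mul {μ : Measure α} {ν : Measure β} {P : Measure Ω}
    [SFinite μ] [SFinite ν] [SFinite P] {f : α → Ω → ℝ} {g : β → Ω → ℝ}
    (hfg : Integrable (fun p : (α × β) × Ω ↦ f p.1.1 p.2 * g p.1.2 p.2) ((μ.prod ν).prod P)) :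
    ∫ a, ∫ b, ∫ ω, f a ω * g b ω ∂P ∂ν ∂μ
      = ∫ ω, (∫ a, f a ω ∂μ) * (∫ b, g b ω ∂ν) ∂P := by
  calc ∫ a, ∫ b, ∫ ω, f a ω * g b ω ∂P ∂ν ∂μ
      = ∫ p, ∫ ω, f p.1 ω * g p.2 ω ∂P ∂(μ.prod ν) := (integral_prod _ hfg.integral_prod_left).symm
    _ = ∫ ω, ∫ p, f p.1 ω * g p.2 ω ∂(μ.prod ν) ∂P := integral_integral_swap hfg
    _ = ∫ ω, (∫ a, f a ω ∂μ) * (∫ b, g b ω ∂ν) ∂P := by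
        congr! 2 with ω
        exact integral_prod_mul (f · ω) (g · ω)

lemma integral_integral_integral_mul_of_norm_le {μ : Measure α} {ν : Measure β} {P : Measure Ω}
    [IsFiniteMeasure μ] [IsFiniteMeasure ν] [IsFiniteMeasure P] {f : α → Ω → ℝ} {g : β → Ω → ℝ}
    (hf : Measurable (Function.uncurry f)) (hg : Measurable (Function.uncurry g)) {C D : ℝ}
    (hfC : ∀ a ω, ‖f a ω‖ ≤ C) (hgD : ∀ b ω, ‖g b ω‖ ≤ D) :
    ∫ a, ∫ b, ∫ ω, f a ω * g b ω ∂P ∂ν ∂μ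
      = ∫ ω, (∫ a, f a ω ∂μ) * (∫ b, g b ω ∂ν) ∂P := by
  refine integral_integral_integral_mul (.of_bound (Measurable.aestronglyMeasurable ?_) (C * D)
    (.of_forall fun p ↦ norm_mul_le_of_le (hfC _ _) (hgD _ _)))
  exact (hf.comp ((measurable_fst.comp measurable_fst).prodMk measurable_snd)).mul
    (hg.comp ((measurable_snd.comp measurable_fst).prodMk measurable_snd))

lemma integral_one_sub_sub_add {P : Measure Ω} [IsProbabilityMeasure P] {u v w : Ω → ℝ}
    (hu : Integrable u P) (hv : Integrable v P) (hw : Integrable w P) :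
    ∫ ω, (1 - u ω - v ω + w ω) ∂P = 1 - ∫ ω, u ω ∂P - ∫ ω, v ω ∂P + ∫ ω, w ω ∂P := by
  have h1u : Integrable (fun ω ↦ 1 - u ω) P := (integrable_const 1).sub hu
  have h1uv : Integrable (fun ω ↦ 1 - u ω - v ω) P := h1u.sub hv
  rw [integral_add h1uv hw, integral_sub h1u hv, integral_sub (integrable_const 1) hu,
    integral_const, probReal_univ, one_smul]

lemma integrable_exp_of_ae_nonpos {P : Measure Ω} [IsFiniteMeasure P] {f : Ω → ℝ}
    (hf : AEMeasurable f P) (hle : ∀ᵐ ω ∂P, f ω ≤ 0) : Integrable (fun ω ↦ exp (f ω)) P := by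
  simpa using integrable_exp_mul_of_le 1 0 zero_le_one hf hle

lemma integral_measureReal_prodMk_left_eq_right {μ : Measure α} {ν : Measure β}
    [IsFiniteMeasure μ] [IsFiniteMeasure ν] {s : Set (α × β)} (hs : MeasurableSet s) :
    ∫ a, ν.real (Prod.mk a ⁻¹' s) ∂μ = ∫ b, μ.real ((Prod.mk · b) ⁻¹' s) ∂ν := by
  simp only [measureReal_def]
  rw [integral_toReal (measurable_measure_prodMk_left hs).aemeasurable
      (.of_forall fun _ ↦ measure_lt_top _ _),
    integral_toReal (measurable_measure_prodMk_right hs).aemeasurable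
      (.of_forall fun _ ↦ measure_lt_top _ _),
    ← Measure.prod_apply hs, ← Measure.prod_apply_symm hs]

lemma ae_fst_ne_snd [MeasurableEq α] {μ ν : Measure α} [SFinite ν] [NullSingletonClass ν] :
    ∀ᵐ p ∂μ.prod ν, p.1 ≠ p.2 := by
  refine Measure.ae_prod_iff_ae_ae ?_ |>.2 ?_
  · exact measurableSet_diagonal.compl
  · exact .of_forall fun x ↦ by simp [ae_iff]

end Prod

section TriangularSplit

variable {α E : Type*} [TopologicalSpace α] [LinearOrder α] [OrderClosedTopology α]
  [SecondCountableTopology α] [MeasurableSpace α] [OpensMeasurableSpace α]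
  [NormedAddCommGroup E] [NormedSpace ℝ E] {μ ν : Measure α} [SFinite μ] [SFinite ν]

lemma setIntegral_fst_lt_snd {f : α × α → E}
    (hf : IntegrableOn f {p | p.1 < p.2} (μ.prod ν)) :
    ∫ p in {p | p.1 < p.2}, f p ∂μ.prod ν = ∫ x, ∫ y in Ioi x, f (x, y) ∂ν ∂μ := by
  have lt_meas : MeasurableSet {p : α × α | p.1 < p.2} :=
    measurableSet_lt measurable_fst measurable_snd
  rw [← integral_indicator lt_meas, integral_prod _ (hf.integrable_indicator lt_meas)]
  congr! 2 with x
  rw [← integral_indicator measurableSet_Ioi]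
  rfl

lemma integral_prod_eq_setIntegral_lt_add_swap [NullSingletonClass ν] {f : α × α → E}
    (hf : Integrable f (μ.prod ν)) :
    ∫ p, f p ∂μ.prod ν = ∫ p in {p | p.1 < p.2}, f p ∂μ.prod ν
      + ∫ p in {p | p.1 < p.2}, f p.swap ∂ν.prod μ := by
  have lt_meas : MeasurableSet {p : α × α | p.1 < p.2} :=
    measurableSet_lt measurable_fst measurable_snd
  have compl_ae_eq : ({p | p.1 < p.2}ᶜ : Set (α × α)) =ᵐ[μ.prod ν] {p | p.2 < p.1} := by
    filter_upwards [ae_fst_ne_snd] with p hp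
    exact propext (not_lt.trans (Ne.symm hp).le_iff_lt)
  rw [← integral_add_compl lt_meas hf, setIntegral_congr_set compl_ae_eq,
    ← Measure.measurePreserving_swap.setIntegral_preimage_emb
      MeasurableEquiv.prodComm.measurableEmbedding f {p | p.2 < p.1}]
  rfl

end TriangularSplit

section FirstPassage

/-- The right-continuous inverse of a path `h : [0, ∞) → ℝ`: the first time it exceeds the level
`t`. The half-line is encoded as the set of nonnegative reals; the value is the junk `0` at a level
which `h` never exceeds. -/
noncomputable def firstPassageTime (h : ℝ → ℝ) (t : ℝ) : ℝ := sInf {x | 0 ≤ x ∧ h x > t}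

variable {h : ℝ → ℝ} {t : ℝ}

lemma firstPassageTime_nonneg (h : ℝ → ℝ) (t : ℝ) : 0 ≤ firstPassageTime h t :=
  Real.sInf_nonneg fun _ hx ↦ hx.1

lemma le_of_lt_firstPassageTime {x : ℝ} (hx0 : 0 ≤ x) (hx : x < firstPassageTime h t) :
    h x ≤ t :=
  not_lt.1 fun htx ↦ notMem_of_lt_csInf hx ⟨0, fun _ hy ↦ hy.1⟩ ⟨hx0, htx⟩

lemma lt_of_firstPassageTime_lt (hmono : MonotoneOn h (Ici 0)) (hex : ∃ x, 0 ≤ x ∧ h x > t)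
    {x : ℝ} (hx : firstPassageTime h t < x) : t < h x := by
  obtain ⟨y, ⟨hy0, hty⟩, hyx⟩ := exists_lt_of_csInf_lt hex hx
  exact hty.trans_le (hmono hy0 (hy0.trans hyx.le) hyx.le)

lemma setOf_lt_ae_eq_Ioi_firstPassageTime {μ : Measure ℝ} [NullSingletonClass μ]
    (hμ : ∀ᵐ x ∂μ, 0 < x) (hmono : MonotoneOn h (Ici 0)) (hex : ∃ x, 0 ≤ x ∧ h x > t) :
    {x | t < h x} =ᵐ[μ] Ioi (firstPassageTime h t) := by
  filter_upwards [hμ, compl_mem_ae_iff.2 (measure_singleton (firstPassageTime h t))]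
    with x hx0 hx_ne
  refine propext ⟨fun htx ↦ ?_, lt_of_firstPassageTime_lt hmono hex⟩
  exact (not_lt.1 fun hlt ↦ htx.not_ge (le_of_lt_firstPassageTime hx0.le hlt)).lt_of_ne' hx_ne

lemma exp_neg_mul_firstPassageTime {ξ : ℝ} (hξ : 0 < ξ) (hmono : MonotoneOn h (Ici 0))
    (hex : ∃ x, 0 ≤ x ∧ h x > t) :
    exp (-(ξ * firstPassageTime h t)) = (expMeasure ξ).real {x | t < h x} := by
  rw [measureReal_congr (setOf_lt_ae_eq_Ioi_firstPassageTime (ae_pos_expMeasure hξ) hmono hex),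
    measureReal_Ioi_expMeasure hξ (firstPassageTime_nonneg h t)]

end FirstPassage

section Duality

variable {Ω : Type*} [MeasurableSpace Ω] {P : Measure Ω} [IsFiniteMeasure P]
  {H H1 H2 : ℝ → Ω → ℝ}

lemma measurable_measureReal_setOf_lt (hH : Measurable (Function.uncurry H)) (μ : Measure ℝ)
    [SFinite μ] : Measurable (Function.uncurry fun t ω ↦ μ.real {x | t < H x ω}) := by
  have lt_meas : MeasurableSet {p : (ℝ × Ω) × ℝ | p.1.1 < H p.2 p.1.2} :=
    measurableSet_lt (measurable_fst.comp measurable_fst)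
      (hH.comp (measurable_snd.prodMk (measurable_snd.comp measurable_fst)))
  exact (measurable_measure_prodMk_left (ν := μ) lt_meas).ennreal_toReal

lemma measurable_measureReal_Iio (hH : Measurable (Function.uncurry H)) (ν : Measure ℝ)
    [IsFiniteMeasure ν] : Measurable (Function.uncurry fun x ω ↦ ν.real (Iio (H x ω))) := by
  have mono : Monotone fun c ↦ ν.real (Iio c) := fun _ _ hcd ↦ measureReal_mono (Iio_subset_Iio hcd)
  exact mono.measurable.comp hH

/-- Both sides are the measure of `{(t1, t2, x, y, ω) | t1 < H1 x ω ∧ t2 < H2 y ω}`. -/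
lemma integral_measureReal_setOf_lt_mul (hH1 : Measurable (Function.uncurry H1))
    (hH2 : Measurable (Function.uncurry H2)) (μ1 μ2 ν1 ν2 : Measure ℝ)
    [IsFiniteMeasure μ1] [IsFiniteMeasure μ2] [IsFiniteMeasure ν1] [IsFiniteMeasure ν2] :
    ∫ t1, ∫ t2, ∫ ω, μ1.real {x | t1 < H1 x ω} * μ2.real {y | t2 < H2 y ω} ∂P ∂ν2 ∂ν1
      = ∫ x, ∫ y, ∫ ω, ν1.real (Iio (H1 x ω)) * ν2.real (Iio (H2 y ω)) ∂P ∂μ2 ∂μ1 := by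
  have norm_le {μ : Measure ℝ} [IsFiniteMeasure μ] (s : Set ℝ) : ‖μ.real s‖ ≤ μ.real univ := by
    rw [norm_of_nonneg measureReal_nonneg]
    exact measureReal_mono (subset_univ s)
  have swap {H : ℝ → Ω → ℝ} (hH : Measurable (Function.uncurry H)) (μ ν : Measure ℝ)
      [IsFiniteMeasure μ] [IsFiniteMeasure ν] (ω : Ω) :
      ∫ t, μ.real {x | t < H x ω} ∂ν = ∫ x, ν.real (Iio (H x ω)) ∂μ :=
    integral_measureReal_prodMk_left_eq_right (s := {p | p.1 < H p.2 ω})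
      (measurableSet_lt measurable_fst (hH.comp (measurable_snd.prodMk measurable_const)))
  rw [integral_integral_integral_mul_of_norm_le (measurable_measureReal_setOf_lt hH1 μ1)
      (measurable_measureReal_setOf_lt hH2 μ2) (fun _ _ ↦ norm_le _) (fun _ _ ↦ norm_le _),
    integral_integral_integral_mul_of_norm_le (measurable_measureReal_Iio hH1 ν1)
      (measurable_measureReal_Iio hH2 ν2) (fun _ _ ↦ norm_le _) (fun _ _ ↦ norm_le _)]
  simp only [swap hH1 μ1 ν1, swap hH2 μ2 ν2]

end Duality

/-- A nonnegative process `(H1, H2)` indexed by `[0, ∞)` (encoded as the nonnegative reals) which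
starts at the origin and whose increments are stationary, independent of the current position, and
have bivariate Laplace exponent `S`. -/
structure IsBivariateSubordinator {Ω : Type*} [MeasurableSpace Ω] (P : Measure Ω)
    (H1 H2 : ℝ → Ω → ℝ) (S : ℝ → ℝ → ℝ) : Prop where
  measurable_fst : Measurable (Function.uncurry H1)
  measurable_snd : Measurable (Function.uncurry H2)
  fst_nonneg : ∀ x ω, 0 ≤ H1 x ω
  snd_nonneg : ∀ x ω, 0 ≤ H2 x ω
  ae_zero : ∀ᵐ ω ∂P, H1 0 ω = 0 ∧ H2 0 ω = 0
  indepFun_increment : ∀ s t : ℝ, 0 ≤ s → s ≤ t →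
    IndepFun (fun ω ↦ (H1 t ω - H1 s ω, H2 t ω - H2 s ω)) (fun ω ↦ (H1 s ω, H2 s ω)) P
  integral_exp_increment : ∀ s t α β : ℝ, 0 ≤ s → s ≤ t → 0 ≤ α → 0 ≤ β →
    ∫ ω, exp (-(α * (H1 t ω - H1 s ω)) - β * (H2 t ω - H2 s ω)) ∂P = exp (-(t - s) * S α β)

namespace IsBivariateSubordinator

variable {Ω : Type*} [MeasurableSpace Ω] {P : Measure Ω} {H1 H2 : ℝ → Ω → ℝ} {S : ℝ → ℝ → ℝ}

lemma measurable_fst_apply (hH : IsBivariateSubordinator P H1 H2 S) (x : ℝ) : Measurable (H1 x) :=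
  hH.measurable_fst.comp measurable_prodMk_left

lemma measurable_snd_apply (hH : IsBivariateSubordinator P H1 H2 S) (x : ℝ) : Measurable (H2 x) :=
  hH.measurable_snd.comp measurable_prodMk_left

lemma integral_exp (hH : IsBivariateSubordinator P H1 H2 S) {x α β : ℝ} (hx : 0 ≤ x) (hα : 0 ≤ α)
    (hβ : 0 ≤ β) : ∫ ω, exp (-(α * H1 x ω) - β * H2 x ω) ∂P = exp (-(x * S α β)) := by
  have increment_from_zero := hH.integral_exp_increment 0 x α β le_rfl hx hα hβ
  rw [sub_zero, neg_mul] at increment_from_zero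
  rw [← increment_from_zero]
  refine integral_congr_ae ?_
  filter_upwards [hH.ae_zero] with ω hω
  rw [hω.1, hω.2, sub_zero, sub_zero]

lemma integral_exp_add_increment (hH : IsBivariateSubordinator P H1 H2 S) {x y α β a b : ℝ}
    (hx : 0 ≤ x) (hxy : x ≤ y) (hα : 0 ≤ α) (hβ : 0 ≤ β) (ha : 0 ≤ a) (hb : 0 ≤ b) :
    ∫ ω, exp (-(a * (H1 y ω - H1 x ω)) - b * (H2 y ω - H2 x ω))
        * exp (-(α * H1 x ω) - β * H2 x ω) ∂P
      = exp (-(x * S α β) - (y - x) * S a b) := by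
  have h1 := hH.measurable_fst_apply
  have h2 := hH.measurable_snd_apply
  rw [(hH.indepFun_increment x y hx hxy).integral_fun_comp_mul_comp
      (f := fun p ↦ exp (-(a * p.1) - b * p.2)) (g := fun p ↦ exp (-(α * p.1) - β * p.2))
      (by fun_prop) (by fun_prop) (by fun_prop) (by fun_prop),
    hH.integral_exp_increment x y a b hx hxy ha hb, hH.integral_exp hx hα hβ, ← exp_add]
  ring_nf

lemma integral_exp_min (hH : IsBivariateSubordinator P H1 H2 S) {x y α β : ℝ}
    (hx : 0 ≤ x) (hy : 0 ≤ y) (hα : 0 ≤ α) (hβ : 0 ≤ β) :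
    ∫ ω, exp (-(α * H1 x ω) - β * H2 y ω) ∂P
      = exp (-(min x y * S α β) - (x - min x y) * S α 0 - (y - min x y) * S 0 β) := by
  rcases le_total x y with hxy | hyx
  · rw [min_eq_left hxy, sub_self, zero_mul, sub_zero,
      ← hH.integral_exp_add_increment hx hxy hα hβ le_rfl hβ]
    congr! 2 with ω
    rw [← exp_add]
    ring_nf
  · rw [min_eq_right hyx, sub_self, zero_mul, sub_zero,
      ← hH.integral_exp_add_increment hy hyx hα hβ hα le_rfl]
    congr! 2 with ω
    rw [← exp_add]
    ring_nf

lemma integral_one_sub_exp_mul_one_sub_exp [IsProbabilityMeasure P]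
    (hH : IsBivariateSubordinator P H1 H2 S) {x y α β : ℝ}
    (hx : 0 ≤ x) (hy : 0 ≤ y) (hα : 0 ≤ α) (hβ : 0 ≤ β) :
    ∫ ω, (1 - exp (-(α * H1 x ω))) * (1 - exp (-(β * H2 y ω))) ∂P
      = 1 - exp (-(x * S α 0)) - exp (-(y * S 0 β))
        + exp (-(min x y * S α β) - (x - min x y) * S α 0 - (y - min x y) * S 0 β) := by
  have h1 := hH.measurable_fst_apply
  have h2 := hH.measurable_snd_apply
  have fst_nonneg ω : 0 ≤ α * H1 x ω := mul_nonneg hα (hH.fst_nonneg x ω)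
  have snd_nonneg ω : 0 ≤ β * H2 y ω := mul_nonneg hβ (hH.snd_nonneg y ω)
  have integral_fst : ∫ ω, exp (-(α * H1 x ω)) ∂P = exp (-(x * S α 0)) := by
    simpa using hH.integral_exp hx hα le_rfl
  have integral_snd : ∫ ω, exp (-(β * H2 y ω)) ∂P = exp (-(y * S 0 β)) := by
    simpa using hH.integral_exp hy le_rfl hβ
  calc ∫ ω, (1 - exp (-(α * H1 x ω))) * (1 - exp (-(β * H2 y ω))) ∂P
      = ∫ ω, (1 - exp (-(α * H1 x ω)) - exp (-(β * H2 y ω))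
          + exp (-(α * H1 x ω) - β * H2 y ω)) ∂P := by
        congr! 2 with ω
        rw [sub_eq_add_neg (-(α * H1 x ω)), exp_add]
        ring
    _ = 1 - ∫ ω, exp (-(α * H1 x ω)) ∂P - ∫ ω, exp (-(β * H2 y ω)) ∂P
          + ∫ ω, exp (-(α * H1 x ω) - β * H2 y ω) ∂P :=
        integral_one_sub_sub_add
          (integrable_exp_of_ae_nonpos (by fun_prop)
            (.of_forall fun ω ↦ by linarith [fst_nonneg ω]))
          (integrable_exp_of_ae_nonpos (by fun_prop)
            (.of_forall fun ω ↦ by linarith [snd_nonneg ω]))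
          (integrable_exp_of_ae_nonpos (by fun_prop)
            (.of_forall fun ω ↦ by linarith [fst_nonneg ω, snd_nonneg ω]))
    _ = _ := by rw [integral_fst, integral_snd, hH.integral_exp_min hx hy hα hβ]

end IsBivariateSubordinator

section TwoExponentialTimes

variable {ξ1 ξ2 T T1 T2 S : ℝ}

lemma ae_pos_prod_expMeasure (hξ1 : 0 < ξ1) (hξ2 : 0 < ξ2) :
    ∀ᵐ p ∂(expMeasure ξ1).prod (expMeasure ξ2), 0 < p.1 ∧ 0 < p.2 := by
  have := isProbabilityMeasure_expMeasure hξ2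
  exact (Measure.quasiMeasurePreserving_fst.ae (ae_pos_expMeasure hξ1)).and
    (Measure.quasiMeasurePreserving_snd.ae (ae_pos_expMeasure hξ2))

lemma setIntegral_lt_exp_expMeasure (hξ1 : 0 < ξ1) (hξ2 : 0 < ξ2) (hT : 0 ≤ T) (hS : 0 ≤ S) :
    ∫ p in {p | p.1 < p.2}, exp (-(p.1 * S) - (p.2 - p.1) * T)
        ∂(expMeasure ξ1).prod (expMeasure ξ2)
      = ξ1 * ξ2 / ((ξ2 + T) * (ξ1 + ξ2 + S)) := by
  have := isProbabilityMeasure_expMeasure hξ1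
  have := isProbabilityMeasure_expMeasure hξ2
  have integrable : IntegrableOn (fun p : ℝ × ℝ ↦ exp (-(p.1 * S) - (p.2 - p.1) * T))
      {p | p.1 < p.2} ((expMeasure ξ1).prod (expMeasure ξ2)) := by
    refine integrable_exp_of_ae_nonpos (by fun_prop) ?_
    filter_upwards [ae_restrict_of_ae (ae_pos_prod_expMeasure hξ1 hξ2),
      ae_restrict_mem (measurableSet_lt measurable_fst measurable_snd)] with p hp hlt
    have := mul_nonneg hp.1.le hS
    have := mul_nonneg (sub_nonneg.2 hlt.le) hT
    linarith
  have inner : ∀ᵐ x ∂expMeasure ξ1,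
      ∫ y in Ioi x, exp (-(x * S) - (y - x) * T) ∂expMeasure ξ2
        = ξ2 / (ξ2 + T) * exp (-(x * (ξ2 + S))) := by
    filter_upwards [ae_pos_expMeasure hξ1] with x hx
    simp only [sub_eq_add_neg (-(x * S)), exp_add, integral_const_mul]
    rw [setIntegral_Ioi_exp_overshoot hξ2 hT hx.le, mul_left_comm, ← exp_add]
    ring_nf
  rw [setIntegral_fst_lt_snd integrable, integral_congr_ae inner, integral_const_mul,
    integral_exp_neg_mul_expMeasure hξ1 (by positivity)]
  field_simp
  ring

lemma integrable_exp_min_expMeasure (hξ1 : 0 < ξ1) (hξ2 : 0 < ξ2) (hT1 : 0 ≤ T1) (hT2 : 0 ≤ T2)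
    (hS : 0 ≤ S) :
    Integrable (fun p : ℝ × ℝ ↦
        exp (-(min p.1 p.2 * S) - (p.1 - min p.1 p.2) * T1 - (p.2 - min p.1 p.2) * T2))
      ((expMeasure ξ1).prod (expMeasure ξ2)) := by
  have := isProbabilityMeasure_expMeasure hξ1
  have := isProbabilityMeasure_expMeasure hξ2
  refine integrable_exp_of_ae_nonpos (by fun_prop) ?_
  filter_upwards [ae_pos_prod_expMeasure hξ1 hξ2] with p hp
  have := mul_nonneg (le_min hp.1.le hp.2.le) hS
  have := mul_nonneg (sub_nonneg.2 (min_le_left p.1 p.2)) hT1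
  have := mul_nonneg (sub_nonneg.2 (min_le_right p.1 p.2)) hT2
  linarith

lemma integral_exp_min_expMeasure (hξ1 : 0 < ξ1) (hξ2 : 0 < ξ2) (hT1 : 0 ≤ T1) (hT2 : 0 ≤ T2)
    (hS : 0 ≤ S) :
    ∫ p, exp (-(min p.1 p.2 * S) - (p.1 - min p.1 p.2) * T1 - (p.2 - min p.1 p.2) * T2)
        ∂(expMeasure ξ1).prod (expMeasure ξ2)
      = ξ1 * ξ2 / (ξ1 + ξ2 + S) * ((ξ1 + T1)⁻¹ + (ξ2 + T2)⁻¹) := by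
  have := isProbabilityMeasure_expMeasure hξ1
  have := isProbabilityMeasure_expMeasure hξ2
  have lt_meas : MeasurableSet {p : ℝ × ℝ | p.1 < p.2} :=
    measurableSet_lt measurable_fst measurable_snd
  let Φ (p : ℝ × ℝ) : ℝ :=
    exp (-(min p.1 p.2 * S) - (p.1 - min p.1 p.2) * T1 - (p.2 - min p.1 p.2) * T2)
  have eq_below : EqOn Φ (fun p ↦ exp (-(p.1 * S) - (p.2 - p.1) * T2)) {p | p.1 < p.2} :=
    fun p (hp : p.1 < p.2) ↦ by simp [Φ, min_eq_left hp.le]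
  have eq_above : EqOn (fun p : ℝ × ℝ ↦ Φ p.swap)
      (fun p ↦ exp (-(p.1 * S) - (p.2 - p.1) * T1)) {p | p.1 < p.2} :=
    fun p (hp : p.1 < p.2) ↦ by simp [Φ, min_eq_right hp.le]
  rw [integral_prod_eq_setIntegral_lt_add_swap
      (integrable_exp_min_expMeasure hξ1 hξ2 hT1 hT2 hS),
    setIntegral_congr_fun lt_meas eq_below, setIntegral_congr_fun lt_meas eq_above,
    setIntegral_lt_exp_expMeasure hξ1 hξ2 hT2 hS, setIntegral_lt_exp_expMeasure hξ2 hξ1 hT1 hS]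
  field_simp
  ring

lemma integral_integral_one_sub_exp_expMeasure (hξ1 : 0 < ξ1) (hξ2 : 0 < ξ2) (hT1 : 0 ≤ T1)
    (hT2 : 0 ≤ T2) (hS : 0 ≤ S) :
    ∫ x, ∫ y, (1 - exp (-(x * T1)) - exp (-(y * T2))
        + exp (-(min x y * S) - (x - min x y) * T1 - (y - min x y) * T2))
        ∂expMeasure ξ2 ∂expMeasure ξ1
      = 1 - ξ1 / (ξ1 + T1) - ξ2 / (ξ2 + T2)
        + ξ1 * ξ2 / (ξ1 + ξ2 + S) * ((ξ1 + T1)⁻¹ + (ξ2 + T2)⁻¹) := by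
  have := isProbabilityMeasure_expMeasure hξ1
  have := isProbabilityMeasure_expMeasure hξ2
  have integrable_exp {ξ T : ℝ} (hξ : 0 < ξ) (hT : 0 ≤ T) :
      Integrable (fun x ↦ exp (-(x * T))) (expMeasure ξ) := by
    have := isProbabilityMeasure_expMeasure hξ
    refine integrable_exp_of_ae_nonpos (by fun_prop) ?_
    filter_upwards [ae_pos_expMeasure hξ] with x hx
    linarith [mul_nonneg hx.le hT]
  have integrable_fst := (integrable_exp hξ1 hT1).comp_fst (expMeasure ξ2)
  have integrable_snd := (integrable_exp hξ2 hT2).comp_snd (expMeasure ξ1)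
  have integrable_min := integrable_exp_min_expMeasure hξ1 hξ2 hT1 hT2 hS
  rw [integral_integral
      ((((integrable_const 1).sub integrable_fst).sub integrable_snd).add integrable_min),
    integral_one_sub_sub_add integrable_fst integrable_snd integrable_min,
    integral_fun_fst (fun x ↦ exp (-(x * T1))), integral_fun_snd (fun y ↦ exp (-(y * T2))),
    integral_exp_neg_mul_expMeasure hξ1 hT1,
    integral_exp_neg_mul_expMeasure hξ2 hT2, integral_exp_min_expMeasure hξ1 hξ2 hT1 hT2 hS,
    probReal_univ, probReal_univ, one_smul, one_smul]

end TwoExponentialTimes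

section DoubleLaplace

variable {ξ1 ξ2 η1 η2 : ℝ}

lemma setIntegral_Ioi_setIntegral_Ioi_exp_neg_mul (hη1 : 0 < η1) (hη2 : 0 < η2)
    (f : ℝ → ℝ → ℝ) :
    ∫ t1 in Ioi 0, ∫ t2 in Ioi 0, exp (-(η1 * t1) - η2 * t2) * f t1 t2
      = (η1 * η2)⁻¹ * ∫ t1, ∫ t2, f t1 t2 ∂expMeasure η2 ∂expMeasure η1 := by
  simp only [sub_eq_add_neg, exp_add, mul_assoc, integral_const_mul,
    setIntegral_Ioi_exp_neg_mul hη1, setIntegral_Ioi_exp_neg_mul hη2, mul_inv]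

lemma integral_exp_firstPassageTime {Ω : Type*} [MeasurableSpace Ω] {P : Measure Ω}
    [IsFiniteMeasure P] {H1 H2 : ℝ → Ω → ℝ} (hH1 : Measurable (Function.uncurry H1))
    (hH2 : Measurable (Function.uncurry H2)) (hH1nonneg : ∀ x ω, 0 ≤ H1 x ω)
    (hH2nonneg : ∀ x ω, 0 ≤ H2 x ω)
    (hmono : ∀ᵐ ω ∂P, MonotoneOn (H1 · ω) (Ici 0) ∧ MonotoneOn (H2 · ω) (Ici 0))
    (hunbdd : ∀ᵐ ω ∂P, ∀ t, (∃ x, 0 ≤ x ∧ H1 x ω > t) ∧ ∃ x, 0 ≤ x ∧ H2 x ω > t)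
    (hξ1 : 0 < ξ1) (hξ2 : 0 < ξ2) (hη1 : 0 < η1) (hη2 : 0 < η2) :
    ∫ t1, ∫ t2, ∫ ω, exp (-(ξ1 * firstPassageTime (H1 · ω) t1)
          - ξ2 * firstPassageTime (H2 · ω) t2) ∂P ∂expMeasure η2 ∂expMeasure η1
      = ∫ x, ∫ y, ∫ ω, (1 - exp (-(η1 * H1 x ω))) * (1 - exp (-(η2 * H2 y ω))) ∂P
          ∂expMeasure ξ2 ∂expMeasure ξ1 := by
  have := isProbabilityMeasure_expMeasure hξ1
  have := isProbabilityMeasure_expMeasure hξ2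
  have := isProbabilityMeasure_expMeasure hη1
  have := isProbabilityMeasure_expMeasure hη2
  have exp_eq_measureReal (t1 t2 : ℝ) :
      ∫ ω, exp (-(ξ1 * firstPassageTime (H1 · ω) t1) - ξ2 * firstPassageTime (H2 · ω) t2) ∂P
        = ∫ ω, (expMeasure ξ1).real {x | t1 < H1 x ω}
            * (expMeasure ξ2).real {y | t2 < H2 y ω} ∂P := by
    refine integral_congr_ae ?_
    filter_upwards [hmono, hunbdd] with ω hmono hunbdd
    rw [sub_eq_add_neg, exp_add, exp_neg_mul_firstPassageTime hξ1 hmono.1 (hunbdd t1).1,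
      exp_neg_mul_firstPassageTime hξ2 hmono.2 (hunbdd t2).2]
  simp only [exp_eq_measureReal]
  rw [integral_measureReal_setOf_lt_mul hH1 hH2]
  simp only [measureReal_Iio_expMeasure hη1 (hH1nonneg _ _),
    measureReal_Iio_expMeasure hη2 (hH2nonneg _ _)]

lemma IsBivariateSubordinator.integral_integral_one_sub_exp {Ω : Type*} [MeasurableSpace Ω]
    {P : Measure Ω} [IsProbabilityMeasure P] {H1 H2 : ℝ → Ω → ℝ} {S : ℝ → ℝ → ℝ}
    (hH : IsBivariateSubordinator P H1 H2 S) (hξ1 : 0 < ξ1) (hξ2 : 0 < ξ2)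
    (hη1 : 0 ≤ η1) (hη2 : 0 ≤ η2) (hT1 : 0 ≤ S η1 0) (hT2 : 0 ≤ S 0 η2) (hS : 0 ≤ S η1 η2) :
    ∫ x, ∫ y, ∫ ω, (1 - exp (-(η1 * H1 x ω))) * (1 - exp (-(η2 * H2 y ω))) ∂P
        ∂expMeasure ξ2 ∂expMeasure ξ1
      = 1 - ξ1 / (ξ1 + S η1 0) - ξ2 / (ξ2 + S 0 η2)
        + ξ1 * ξ2 / (ξ1 + ξ2 + S η1 η2) * ((ξ1 + S η1 0)⁻¹ + (ξ2 + S 0 η2)⁻¹) := by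
  rw [← integral_integral_one_sub_exp_expMeasure hξ1 hξ2 hT1 hT2 hS]
  refine integral_congr_ae ?_
  filter_upwards [ae_pos_expMeasure hξ1] with x hx
  refine integral_congr_ae ?_
  filter_upwards [ae_pos_expMeasure hξ2] with y hy
  exact hH.integral_one_sub_exp_mul_one_sub_exp hx.le hy.le hη1 hη2

end DoubleLaplace

/-- Space-time double Laplace transform of the inverse of a
bivariate subordinator, with `T₁ = S(η₁,0)`, `T₂ = S(0,η₂)`. -/
theorem laplace_transform_inverse_bivariate_subordinator
    {Ω : Type*} [MeasurableSpace Ω] (P : Measure Ω) [IsProbabilityMeasure P]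
    (H1 H2 : ℝ → Ω → ℝ) (S : ℝ → ℝ → ℝ)
    (hH1meas : Measurable (Function.uncurry H1))
    (hH2meas : Measurable (Function.uncurry H2))
    (hH1nonneg : ∀ x ω, 0 ≤ H1 x ω) (hH2nonneg : ∀ x ω, 0 ≤ H2 x ω)
    (hzero : ∀ᵐ ω ∂P, H1 0 ω = 0 ∧ H2 0 ω = 0)
    (hSnonneg : ∀ α β : ℝ, 0 ≤ α → 0 ≤ β → 0 ≤ S α β)
    (hindep : ∀ s t : ℝ, 0 ≤ s → s ≤ t →
      IndepFun (fun ω => (H1 t ω - H1 s ω, H2 t ω - H2 s ω))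
        (fun ω => (H1 s ω, H2 s ω)) P)
    (hincr : ∀ s t α β : ℝ, 0 ≤ s → s ≤ t → 0 ≤ α → 0 ≤ β →
      ∫ ω, Real.exp (-(α * (H1 t ω - H1 s ω)) - β * (H2 t ω - H2 s ω)) ∂P
        = Real.exp (-(t - s) * S α β))
    (hpath : ∀ᵐ ω ∂P,
      (∀ x y : ℝ, 0 ≤ x → x ≤ y → H1 x ω ≤ H1 y ω) ∧
      (∀ M : ℝ, ∃ x : ℝ, 0 ≤ x ∧ H1 x ω > M) ∧
      (∀ x y : ℝ, 0 ≤ x → x ≤ y → H2 x ω ≤ H2 y ω) ∧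
      (∀ M : ℝ, ∃ x : ℝ, 0 ≤ x ∧ H2 x ω > M))
    (L1 L2 : ℝ → Ω → ℝ)
    (hL1 : ∀ t ω, L1 t ω = sInf {x : ℝ | 0 ≤ x ∧ H1 x ω > t})
    (hL2 : ∀ t ω, L2 t ω = sInf {x : ℝ | 0 ≤ x ∧ H2 x ω > t})
    (ξ1 ξ2 η1 η2 : ℝ) (hξ1 : 0 < ξ1) (hξ2 : 0 < ξ2) (hη1 : 0 < η1) (hη2 : 0 < η2)
    (hT1 : 0 < S η1 0) (hT2 : 0 < S 0 η2) (hS : 0 < S η1 η2) :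
    ∫ t1 in Set.Ioi (0 : ℝ), ∫ t2 in Set.Ioi (0 : ℝ),
        Real.exp (-(η1 * t1) - η2 * t2) *
          (∫ ω, Real.exp (-(ξ1 * L1 t1 ω) - ξ2 * L2 t2 ω) ∂P)
      = S η1 0 * S 0 η2 / (η1 * η2 * (ξ1 + S η1 0) * (ξ2 + S 0 η2))
        + ξ1 * ξ2 * (S η1 0 + S 0 η2 - S η1 η2) /
            (η1 * η2 * (ξ1 + S η1 0) * (ξ2 + S 0 η2) * (ξ1 + ξ2 + S η1 η2)) := by
  have hH : IsBivariateSubordinator P H1 H2 S :=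
    ⟨hH1meas, hH2meas, hH1nonneg, hH2nonneg, hzero, hindep, hincr⟩
  have hmono : ∀ᵐ ω ∂P, MonotoneOn (H1 · ω) (Ici 0) ∧ MonotoneOn (H2 · ω) (Ici 0) :=
    hpath.mono fun ω hω ↦
      ⟨fun x hx y _ hxy ↦ hω.1 x y hx hxy, fun x hx y _ hxy ↦ hω.2.2.1 x y hx hxy⟩
  have hunbdd : ∀ᵐ ω ∂P, ∀ t, (∃ x, 0 ≤ x ∧ H1 x ω > t) ∧ ∃ x, 0 ≤ x ∧ H2 x ω > t :=
    hpath.mono fun ω hω t ↦ ⟨hω.2.1 t, hω.2.2.2 t⟩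
  obtain rfl : L1 = fun t ω ↦ firstPassageTime (H1 · ω) t := funext₂ hL1
  obtain rfl : L2 = fun t ω ↦ firstPassageTime (H2 · ω) t := funext₂ hL2
  rw [setIntegral_Ioi_setIntegral_Ioi_exp_neg_mul hη1 hη2,
    integral_exp_firstPassageTime hH1meas hH2meas hH1nonneg hH2nonneg hmono hunbdd hξ1 hξ2 hη1 hη2,
    hH.integral_integral_one_sub_exp hξ1 hξ2 hη1.le hη2.le hT1.le hT2.le hS.le]
  field_simp
  ring
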